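/- Let n ≥ 5 and let P = {p_0, …, p_{n−1}} be n distinct points on the unit circle listed in counterclockwise cyclic order, containing no symmetric quadruple. Suppose the ear se_0 is the unique ear of maximal length, and exactly two ears se_1 ≠ se_2 attain the second greatest ear length, with ‖se_0‖ > ‖se_1‖ = ‖se_2‖. Then: (a) if se_0 crosses both se_1 and se_2, every length maximal triangulation of P contains se_1 and se_2; (b) if se_0 crosses exactly one of se_1, se_2, every length maximal triangulation of P contains se_0 and the one of se_1, se_2 that se_0 does not cross; (c) if se_0 crosses neither se_1 nor se_2, every length maximal triangulation of P contains se_0. -/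

import Mathlib

/-!
Every triangulation of a polygon has two ears. For `n ≥ 5` and under the hypotheses on the three
longest ears, the least length `D(τ)₁` is therefore at most `L = ‖ear i1‖ = ‖ear i2‖`, and a
triangulation with `D(τ)₁ = L` has two of `ear i0`, `ear i1`, `ear i2` among its diagonals.

Conversely, two non-crossing ears at `v` and `w` extend to a strip, i.e. a triangulation in which
every diagonal separates `v` from `w` (`exists_strip`). The arc cut off by such a diagonal lies
between the arc of the ear at `w` and the complement of the arc of the ear at `v`; since
`t ↦ sin (t / 2)` is strictly concave on `[0, 2π]`, every diagonal of the strip other than the two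
ears is strictly longer than the shorter of them.

* If `ear i0` crosses both `ear i1` and `ear i2`, the latter two do not cross, and their strip shows
  that a length maximal triangulation has `D(τ)₁ = L`. It contains two of the three ears, which do
  not cross, so these are `ear i1` and `ear i2`.
* If `ear i0` does not cross `ear j` for some `j ∈ {i1, i2}`, the strip of `ear i0` and `ear j` has
  exactly one diagonal of length `L`, the others being longer. So a length maximal triangulation
  has `D(τ)₁ = L` and cannot contain both `ear i1` and `ear i2`; it contains `ear i0` together with
  one of them, necessarily one that `ear i0` does not cross.

The two ears theorem (`IsTriangulation.exists_ear`) has to be derived from the definition of a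
triangulation as `n - 3` non-crossing diagonals. Cutting the cycle open at a vertex `v` turns
diagonals into pairs of natural numbers, and `exists_short_pair` finds an ear away from `v` by
counting apexes.
-/

/-- The point on the unit circle of `ℝ²` at angle `θ`. -/
noncomputable def pt (θ : ℝ) : EuclideanSpace ℝ (Fin 2) :=
  (WithLp.equiv 2 (Fin 2 → ℝ)).symm ![Real.cos θ, Real.sin θ]

variable {n : ℕ} [NeZero n]

/-- `k` lies strictly between `i` and `j` in counterclockwise cyclic order. -/
def CcwBtw (i k j : ZMod n) : Prop :=
  0 < (k - i).val ∧ (k - i).val < (j - i).val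

/-- `d` is a diagonal of the convex polygon on indices `ZMod n`. -/
def IsDiag (d : Sym2 (ZMod n)) : Prop :=
  ∃ i j : ZMod n, d = s(i, j) ∧ j ≠ i - 1 ∧ j ≠ i ∧ j ≠ i + 1

/-- `d` is a chord, i.e. a pair of cyclically consecutive indices. -/
def IsChord (d : Sym2 (ZMod n)) : Prop :=
  ∃ i : ZMod n, d = s(i, i + 1)

/-- Two diagonals `{i, j}` and `{k, l}` cross if exactly one of `k`, `l` lies
strictly between `i` and `j` in cyclic order (equivalently, one of them lies
strictly in the arc from `i` to `j` and the other strictly in the arc from `j`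
to `i`). -/
def Crosses (d e : Sym2 (ZMod n)) : Prop :=
  ∃ i j k l : ZMod n, d = s(i, j) ∧ e = s(k, l) ∧ CcwBtw i k j ∧ CcwBtw j l i

/-- A triangulation: `n - 3` pairwise non-crossing diagonals. -/
def IsTriangulation (τ : Finset (Sym2 (ZMod n))) : Prop :=
  τ.card = n - 3 ∧ (∀ d ∈ τ, IsDiag d) ∧ ∀ d ∈ τ, ∀ e ∈ τ, ¬ Crosses d e

/-- The length of the segment joining the two points indexed by `d`. -/
noncomputable def len (p : ZMod n → EuclideanSpace ℝ (Fin 2)) (d : Sym2 (ZMod n)) : ℝ :=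
  Sym2.lift ⟨fun i j => ‖p i - p j‖, fun _ _ => norm_sub_rev _ _⟩ d

/-- `D(τ)`: the lengths of the diagonals of `τ` sorted in nondecreasing order. -/
noncomputable def sortedLengths (p : ZMod n → EuclideanSpace ℝ (Fin 2))
    (τ : Finset (Sym2 (ZMod n))) : List ℝ :=
  (τ.val.map (len p)).sort (· ≤ ·)

/-- Lexicographic order on lists of reals. -/
def lexLE (l l' : List ℝ) : Prop := l = l' ∨ List.Lex (· < ·) l l'

/-- `τ` is length maximal: it is a triangulation whose sorted list of diagonal
lengths is greatest in the lexicographic order among all triangulations. -/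
def LengthMaximal (p : ZMod n → EuclideanSpace ℝ (Fin 2))
    (τ : Finset (Sym2 (ZMod n))) : Prop :=
  IsTriangulation τ ∧
    ∀ τ' : Finset (Sym2 (ZMod n)), IsTriangulation τ' →
      lexLE (sortedLengths p τ') (sortedLengths p τ)

/-- A side of a triangle of `τ`: a chord, or a diagonal belonging to `τ`. -/
def IsSide (τ : Finset (Sym2 (ZMod n))) (d : Sym2 (ZMod n)) : Prop :=
  IsChord d ∨ d ∈ τ

open scoped Classical in
/-- `A(τ)`: the `3(n-2)` angles of the triangles of `τ` sorted in nondecreasing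
order.  Triangles are recorded as triples `a < b < c` (ordered by residue) all of
whose sides are chords or diagonals of `τ`, each contributing its three angles. -/
noncomputable def sortedAngles (p : ZMod n → EuclideanSpace ℝ (Fin 2))
    (τ : Finset (Sym2 (ZMod n))) : List ℝ :=
  ((Finset.univ.filter fun x : ZMod n × ZMod n × ZMod n =>
      x.1.val < x.2.1.val ∧ x.2.1.val < x.2.2.val ∧
      IsSide τ s(x.1, x.2.1) ∧ IsSide τ s(x.2.1, x.2.2) ∧ IsSide τ s(x.1, x.2.2)).val.bind
    fun x =>
      {EuclideanGeometry.angle (p x.2.1) (p x.1) (p x.2.2),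
       EuclideanGeometry.angle (p x.1) (p x.2.1) (p x.2.2),
       EuclideanGeometry.angle (p x.1) (p x.2.2) (p x.2.1)}).sort (· ≤ ·)

/-- `τ` is angle maximal: it is a triangulation whose sorted list of angles is
greatest in the lexicographic order among all triangulations. -/
def AngleMaximal (p : ZMod n → EuclideanSpace ℝ (Fin 2))
    (τ : Finset (Sym2 (ZMod n))) : Prop :=
  IsTriangulation τ ∧
    ∀ τ' : Finset (Sym2 (ZMod n)), IsTriangulation τ' →
      lexLE (sortedAngles p τ') (sortedAngles p τ)

/-- The ear `e_i = {i-1, i+1}`. -/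
def ear (i : ZMod n) : Sym2 (ZMod n) := s(i - 1, i + 1)

/-- `P` contains a symmetric quadruple: indices `i < j < k < l` with
`‖p i - p k‖ = ‖p j - p l‖`. -/
def HasSymQuad (p : ZMod n → EuclideanSpace ℝ (Fin 2)) : Prop :=
  ∃ i j k l : ZMod n, i.val < j.val ∧ j.val < k.val ∧ k.val < l.val ∧
    ‖p i - p k‖ = ‖p j - p l‖

/-! ### Sorted lists and the lexicographic order -/

theorem not_lexLE_of_small {L : ℝ} {l l' : List ℝ} (hl0 : l ≠ []) (hl : ∀ x ∈ l, L ≤ x)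
    (hs : l'.Pairwise (· ≤ ·)) (hx : ∃ x ∈ l', x < L) : ¬ lexLE l l' := by
  obtain ⟨x, hx, hxL⟩ := hx
  cases l with
  | nil => exact absurd rfl hl0
  | cons a r =>
    cases l' with
    | nil => simp at hx
    | cons b t =>
      have hb : b < L := by
        rcases List.mem_cons.1 hx with rfl | h
        · exact hxL
        · exact ((List.pairwise_cons.1 hs).1 x h).trans_lt hxL
      have ha : L ≤ a := hl a (by simp)
      rintro (h | h)
      · simp only [List.cons.injEq] at h
        linarith [h.1]
      · cases h with
        | rel h => linarith
        | cons h => linarith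

theorem not_lexLE_of_double {L : ℝ} {r l' : List ℝ} (hr0 : r ≠ []) (hr : ∀ x ∈ r, L < x)
    (hs : l'.Pairwise (· ≤ ·)) (hc : 2 ≤ l'.count L) : ¬ lexLE (L :: r) l' := by
  cases l' with
  | nil => simp at hc
  | cons a t =>
    have hL : L ∈ a :: t := List.count_pos_iff.1 (by omega)
    have haL : a ≤ L := by
      rcases List.mem_cons.1 hL with rfl | h
      · exact le_rfl
      · exact (List.pairwise_cons.1 hs).1 L h
    have hLt : L ∈ t := by
      refine List.count_pos_iff.1 ?_
      have := List.count_cons (a := L) (b := a) (l := t)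
      split_ifs at this <;> omega
    cases t with
    | nil => simp at hLt
    | cons b t =>
      have hbL : b ≤ L := by
        rcases List.mem_cons.1 hLt with rfl | h
        · exact le_rfl
        · exact (List.pairwise_cons.1 (List.pairwise_cons.1 hs).2).1 L h
      cases r with
      | nil => exact absurd rfl hr0
      | cons c r =>
        have hc : L < c := hr c (by simp)
        rintro (h | h)
        · simp only [List.cons.injEq] at h
          linarith [h.2.1]
        · cases h with
          | rel h => linarith
          | cons h =>
            cases h with
            | rel h => linarith
            | cons h => linarith

theorem mem_sortedLengths {p : ZMod n → EuclideanSpace ℝ (Fin 2)} {τ : Finset (Sym2 (ZMod n))}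
    {x : ℝ} : x ∈ sortedLengths p τ ↔ ∃ d ∈ τ, len p d = x := by
  simp [sortedLengths]

/-- If some triangulation has all its diagonals of length at least `L`, then so has every length
maximal one. -/
theorem LengthMaximal.le_len {p : ZMod n → EuclideanSpace ℝ (Fin 2)}
    {τ T : Finset (Sym2 (ZMod n))} (hτ : LengthMaximal p τ) (hT : IsTriangulation T)
    (hne : T.Nonempty) {L : ℝ} (h : ∀ d ∈ T, L ≤ len p d) : ∀ d ∈ τ, L ≤ len p d := by
  intro d hd
  by_contra! hlt
  refine not_lexLE_of_small (L := L) ?_ ?_ (Multiset.pairwise_sort _ _) ?_ (hτ.2 T hT)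
  · obtain ⟨e, he⟩ := hne
    exact List.ne_nil_of_mem (mem_sortedLengths.2 ⟨e, he, rfl⟩)
  · intro x hx
    obtain ⟨e, he, rfl⟩ := mem_sortedLengths.1 hx
    exact h e he
  · exact ⟨_, mem_sortedLengths.2 ⟨d, hd, rfl⟩, hlt⟩

/-- If some triangulation has exactly one diagonal of length `L` and all others longer, then no
length maximal triangulation has two diagonals of length `L`. -/
theorem LengthMaximal.not_double {p : ZMod n → EuclideanSpace ℝ (Fin 2)}
    {τ T : Finset (Sym2 (ZMod n))} (hτ : LengthMaximal p τ) (hT : IsTriangulation T)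
    {L : ℝ} {e e' : Sym2 (ZMod n)} (he : e ∈ T) (he' : e' ∈ T) (hee : e' ≠ e)
    (heL : len p e = L) (h : ∀ d ∈ T, d ≠ e → L < len p d)
    {d d' : Sym2 (ZMod n)} (hd : d ∈ τ) (hd' : d' ∈ τ) (hdd : d ≠ d')
    (hdL : len p d = L) (hdL' : len p d' = L) : False := by
  classical
  have hTs : sortedLengths p T = L :: sortedLengths p (T.erase e) := by
    unfold sortedLengths
    rw [← Multiset.sort_cons]
    · rw [← heL, ← Multiset.map_cons, Finset.erase_val, Multiset.cons_erase he]
    · intro b hb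
      obtain ⟨c, hc, rfl⟩ := Multiset.mem_map.1 hb
      have hc' : c ∈ T.erase e := hc
      exact (h c (Finset.mem_of_mem_erase hc') (Finset.ne_of_mem_erase hc')).le
  have hlex := hτ.2 T hT
  rw [hTs] at hlex
  refine not_lexLE_of_double ?_ ?_ (Multiset.pairwise_sort _ _) ?_ hlex
  · exact List.ne_nil_of_mem
      (mem_sortedLengths.2 ⟨e', Finset.mem_erase.2 ⟨hee, he'⟩, rfl⟩)
  · intro x hx
    obtain ⟨c, hc, rfl⟩ := mem_sortedLengths.1 hx
    exact h c (Finset.mem_of_mem_erase hc) (Finset.ne_of_mem_erase hc)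
  · rw [← Multiset.coe_count]
    simp only [Multiset.sort_eq]
    rw [Multiset.count_map, ← Finset.filter_val, Finset.card_val]
    calc 2 = ({d, d'} : Finset _).card := (Finset.card_pair hdd).symm
      _ ≤ _ := by
        apply Finset.card_le_card
        intro x hx
        simp only [Finset.mem_insert, Finset.mem_singleton] at hx
        rcases hx with rfl | rfl <;> simp [*]

/-! ### Linear coordinates on `ZMod n` -/

theorem val_sub_coord (v : ZMod n) {x y : ℕ} (hx : x < n) (hy : y < n) :
    ((v + (y : ZMod n)) - (v + (x : ZMod n))).val = if x ≤ y then y - x else n + y - x := by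
  rw [add_sub_add_left_eq_sub]
  split_ifs with h
  · rw [← Nat.cast_sub h, ZMod.val_natCast_of_lt (by omega)]
  · have : (y : ZMod n) - x = ((n + y - x : ℕ) : ZMod n) := by
      rw [Nat.cast_sub (by omega)]
      simp
    rw [this, ZMod.val_natCast_of_lt (by omega)]

theorem coord_inj (v : ZMod n) {x y : ℕ} (hx : x < n) (hy : y < n)
    (h : v + (x : ZMod n) = v + (y : ZMod n)) : x = y := by
  have h' := add_left_cancel h
  have := congrArg ZMod.val h'
  rwa [ZMod.val_natCast_of_lt hx, ZMod.val_natCast_of_lt hy] at this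

theorem exists_coord (v i : ZMod n) : ∃ x : ℕ, x < n ∧ i = v + (x : ZMod n) :=
  ⟨(i - v).val, ZMod.val_lt _, by simp⟩

/-- Crossing, read off the linear coordinates based at an arbitrary vertex `v`. -/
theorem crosses_coord (v : ZMod n) {a b c d : ℕ} (hab : a < b) (hb : b < n) (hcd : c < d)
    (hd : d < n) :
    Crosses s(v + (a : ZMod n), v + (b : ZMod n)) s(v + (c : ZMod n), v + (d : ZMod n)) ↔
      (a < c ∧ c < b ∧ b < d) ∨ (c < a ∧ a < d ∧ d < b) := by
  constructor
  · rintro ⟨i, j, k, l, h1, h2, ⟨h3, h4⟩, h5, h6⟩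
    obtain ⟨x, hx, rfl⟩ := exists_coord v i
    obtain ⟨y, hy, rfl⟩ := exists_coord v j
    obtain ⟨z, hz, rfl⟩ := exists_coord v k
    obtain ⟨w, hw, rfl⟩ := exists_coord v l
    rw [val_sub_coord v (by assumption) (by assumption)] at h3 h4 h5 h6
    rw [val_sub_coord v (by assumption) (by assumption)] at h4 h6
    have e1 : (a = x ∧ b = y) ∨ (a = y ∧ b = x) := by
      rcases Sym2.eq_iff.1 h1 with ⟨g1, g2⟩ | ⟨g1, g2⟩
      · exact .inl ⟨coord_inj v (by omega) hx g1, coord_inj v hb hy g2⟩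
      · exact .inr ⟨coord_inj v (by omega) hy g1, coord_inj v hb hx g2⟩
    have e2 : (c = z ∧ d = w) ∨ (c = w ∧ d = z) := by
      rcases Sym2.eq_iff.1 h2 with ⟨g1, g2⟩ | ⟨g1, g2⟩
      · exact .inl ⟨coord_inj v (by omega) hz g1, coord_inj v hd hw g2⟩
      · exact .inr ⟨coord_inj v (by omega) hw g1, coord_inj v hd hz g2⟩
    clear h1 h2
    split_ifs at h3 h4 h5 h6 <;> omega
  · have ha : a < n := by omega
    have hc : c < n := by omega
    rintro (h | h)
    · refine ⟨v + a, v + b, v + c, v + d, rfl, rfl, ⟨?_, ?_⟩, ?_, ?_⟩ <;>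
        simp only [val_sub_coord v ha hb, val_sub_coord v ha hc, val_sub_coord v hb hd,
          val_sub_coord v hb ha] <;> split_ifs <;> omega
    · refine ⟨v + a, v + b, v + d, v + c, rfl, Sym2.eq_swap, ⟨?_, ?_⟩, ?_, ?_⟩ <;>
        simp only [val_sub_coord v ha hb, val_sub_coord v ha hd, val_sub_coord v hb hc,
          val_sub_coord v hb ha] <;> split_ifs <;> omega

theorem pair_coord_inj (v : ZMod n) {a b c d : ℕ} (hab : a < b) (hb : b < n) (hcd : c < d)
    (hd : d < n)
    (h : s(v + (a : ZMod n), v + (b : ZMod n)) = s(v + (c : ZMod n), v + (d : ZMod n))) :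
    a = c ∧ b = d := by
  rcases Sym2.eq_iff.1 h with ⟨g1, g2⟩ | ⟨g1, g2⟩
  · exact ⟨coord_inj v (by omega) (by omega) g1, coord_inj v hb hd g2⟩
  · have := coord_inj v (by omega) hd g1
    have := coord_inj v hb (by omega) g2
    omega

theorem isDiag_coord (v : ZMod n) {a b : ℕ} (hab : a + 2 ≤ b) (hb : b < n)
    (h : a ≠ 0 ∨ b ≠ n - 1) : IsDiag s(v + (a : ZMod n), v + (b : ZMod n)) := by
  refine ⟨_, _, rfl, ?_, ?_, ?_⟩
  · intro h'
    have h2 : v + ((b + 1 : ℕ) : ZMod n) = v + (a : ZMod n) := by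
      push_cast; rw [← add_assoc, h']; ring
    by_cases hbn : b + 1 < n
    · have := coord_inj v hbn (by omega) h2
      omega
    · have hbn : b + 1 = n := by omega
      rw [hbn] at h2
      have := coord_inj v (x := 0) (y := a) (by omega) (by omega) (by simpa using h2)
      omega
  · intro h'
    have := coord_inj v hb (by omega) h'
    omega
  · intro h'
    have := coord_inj v (x := b) (y := a + 1) hb (by omega) (by push_cast; rw [h']; ring)
    omega

theorem exists_coord_of_isDiag (v : ZMod n) {d : Sym2 (ZMod n)} (hd : IsDiag d) :
    ∃ a b : ℕ, a + 2 ≤ b ∧ b < n ∧ (a ≠ 0 ∨ b ≠ n - 1) ∧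
      d = s(v + (a : ZMod n), v + (b : ZMod n)) := by
  have key : ∀ a b : ℕ, a < n → b < n → a < b →
      v + (b : ZMod n) ≠ v + (a : ZMod n) - 1 → v + (b : ZMod n) ≠ v + (a : ZMod n) + 1 →
      a + 2 ≤ b ∧ (a ≠ 0 ∨ b ≠ n - 1) := by
    intro a b ha hb hab h1 h2
    constructor
    · by_contra h
      have : b = a + 1 := by omega
      subst this
      exact h2 (by push_cast; ring)
    · by_contra! h
      obtain ⟨rfl, rfl⟩ := h
      apply h1
      rw [Nat.cast_sub (by omega)]
      simp
      ring
  obtain ⟨i, j, rfl, h1, h2, h3⟩ := hd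
  obtain ⟨x, hx, rfl⟩ := exists_coord v i
  obtain ⟨y, hy, rfl⟩ := exists_coord v j
  rcases lt_trichotomy x y with h | rfl | h
  · obtain ⟨k1, k2⟩ := key x y hx hy h h1 h3
    exact ⟨x, y, k1, hy, k2, rfl⟩
  · exact absurd rfl h2
  · obtain ⟨k1, k2⟩ := key y x hy hx h (fun h => h3 (by rw [h]; ring)) (fun h => h1 (by rw [h]; ring))
    exact ⟨y, x, k1, hx, k2, Sym2.eq_swap⟩

theorem ear_coord (v : ZMod n) {k : ℕ} (hk : 1 ≤ k) :
    ear (v + (k : ZMod n)) = s(v + ((k - 1 : ℕ) : ZMod n), v + ((k + 1 : ℕ) : ZMod n)) := by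
  unfold ear
  rw [Nat.cast_sub hk]
  push_cast
  rw [add_assoc, add_sub_assoc]

theorem ear_base (v : ZMod n) :
    ear v = s(v + ((1 : ℕ) : ZMod n), v + ((n - 1 : ℕ) : ZMod n)) := by
  unfold ear
  rw [Nat.cast_sub (Nat.one_le_iff_ne_zero.2 (NeZero.ne n)), Sym2.eq_swap]
  simp [sub_eq_add_neg]

theorem ear_last (v : ZMod n) (hn : 2 ≤ n) :
    ear (v + ((n - 1 : ℕ) : ZMod n)) =
      s(v + ((0 : ℕ) : ZMod n), v + ((n - 2 : ℕ) : ZMod n)) := by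
  unfold ear
  rw [Nat.cast_sub (by omega), Nat.cast_sub hn, Sym2.eq_swap]
  simp
  left
  ring

/-- For `n ≥ 5`, an ear crosses exactly the two neighbouring ears. -/
theorem crosses_ear_coord (hn : 5 ≤ n) (v : ZMod n) {k : ℕ} (hk : k < n) :
    Crosses (ear v) (ear (v + (k : ZMod n))) ↔ k = 1 ∨ k = n - 1 := by
  rcases Nat.eq_zero_or_pos k with rfl | h0
  · rw [Nat.cast_zero, add_zero, ear_base,
      crosses_coord v (by omega) (by omega) (by omega) (by omega)]
    omega
  by_cases h1 : k = n - 1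
  · rw [h1, ear_last v (by omega), ear_base,
      crosses_coord v (by omega) (by omega) (by omega) (by omega)]
    omega
  · rw [ear_coord v h0, ear_base,
      crosses_coord v (by omega) (by omega) (by omega) (by omega)]
    omega

theorem ear_injective (hn : 5 ≤ n) : Function.Injective (ear : ZMod n → Sym2 (ZMod n)) := by
  intro v w h
  obtain ⟨k, hk, rfl⟩ := exists_coord v w
  rcases Nat.eq_zero_or_pos k with rfl | h0
  · simp
  exfalso
  by_cases h1 : k = n - 1
  · rw [h1, ear_last v (by omega), ear_base] at h
    have := pair_coord_inj v (by omega) (by omega) (by omega) (by omega) h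
    omega
  · rw [ear_coord v h0, ear_base] at h
    have := pair_coord_inj v (by omega) (by omega) (by omega) (by omega) h
    omega

/-! ### Every triangulation has two ears -/

open Classical in
/-- The apex of the pair `(i, j)` relative to a set `S` of pairs: the largest `k` strictly
between `i` and `j` for which `(i, k)` belongs to `S` or is a side, i.e. `k = i + 1`.  When `S` is
a triangulation this is the third vertex of the triangle just below `(i, j)`. -/
noncomputable def apex (S : Finset (ℕ × ℕ)) (q : ℕ × ℕ) : ℕ :=
  Nat.findGreatest (fun k => k = q.1 + 1 ∨ (q.1, k) ∈ S) (q.2 - 1)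

/-- A family of `m - 1` pairwise non-crossing pairs in `{0, …, m}`, none of which is a side,
contains a pair `(i, i + 2)`.  The apex map is injective on such a family, with values strictly
between `0` and `m`, hence a bijection; a shortest pair must then be an ear. -/
theorem exists_short_pair {m : ℕ} (hm : 2 ≤ m) (S : Finset (ℕ × ℕ))
    (hS : ∀ q ∈ S, q.1 + 2 ≤ q.2 ∧ q.2 ≤ m)
    (hcr : ∀ q ∈ S, ∀ r ∈ S, ¬ (q.1 < r.1 ∧ r.1 < q.2 ∧ q.2 < r.2))
    (hcard : m - 1 ≤ S.card) : ∃ i, (i, i + 2) ∈ S := by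
  have hap : ∀ q ∈ S, (apex S q = q.1 + 1 ∨ (q.1, apex S q) ∈ S) ∧ q.1 < apex S q ∧
      apex S q < q.2 := by
    intro q hq
    have h1 := hS q hq
    have h2 := Nat.findGreatest_spec (P := fun k => k = q.1 + 1 ∨ (q.1, k) ∈ S)
      (m := q.1 + 1) (n := q.2 - 1) (by omega) (.inl rfl)
    have h3 := Nat.le_findGreatest (P := fun k => k = q.1 + 1 ∨ (q.1, k) ∈ S)
      (m := q.1 + 1) (n := q.2 - 1) (by omega) (.inl rfl)
    have h4 := Nat.findGreatest_le (P := fun k => k = q.1 + 1 ∨ (q.1, k) ∈ S) (q.2 - 1)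
    exact ⟨h2, by unfold apex; omega, by unfold apex; omega⟩
  have hmax : ∀ q k, k < q.2 → (q.1, k) ∈ S → k ≤ apex S q := fun q k hk h =>
    Nat.le_findGreatest (by omega) (.inr h)
  have hlt : ∀ q ∈ S, ∀ r ∈ S, apex S q = apex S r → ¬ q.1 < r.1 := by
    intro q hq r hr h hlt
    obtain ⟨a1, a2, a3⟩ := hap q hq
    obtain ⟨b1, b2, b3⟩ := hap r hr
    rcases a1 with a1 | a1
    · omega
    · exact hcr _ a1 r hr ⟨hlt, by simp only; omega, by simp only; omega⟩
  have hinj : Set.InjOn (apex S) S := by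
    intro q hq r hr h
    have h1 : q.1 = r.1 :=
      le_antisymm (not_lt.1 (hlt r hr q hq h.symm)) (not_lt.1 (hlt q hq r hr h))
    have h2 : q.2 = r.2 := by
      rcases lt_trichotomy q.2 r.2 with g | g | g
      · have := hmax r q.2 g (by rw [← h1]; exact hq)
        have := (hap q hq).2.2
        omega
      · exact g
      · have := hmax q r.2 g (by rw [h1]; exact hr)
        have := (hap r hr).2.2
        omega
    exact Prod.ext h1 h2
  have himg : S.image (apex S) = Finset.Ioo 0 m := by
    apply Finset.eq_of_subset_of_card_le
    · intro k hk
      obtain ⟨q, hq, rfl⟩ := Finset.mem_image.1 hk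
      have := hap q hq
      have := hS q hq
      exact Finset.mem_Ioo.2 ⟨by omega, by omega⟩
    · rw [Finset.card_image_of_injOn hinj, Nat.card_Ioo]
      omega
  have hne : S.Nonempty := Finset.card_pos.1 (by omega)
  obtain ⟨q, hq, hmin⟩ := S.exists_min_image (fun q => q.2 - q.1) hne
  obtain ⟨g1, g2⟩ := hS q hq
  refine ⟨q.1, ?_⟩
  by_cases hq2 : q.2 = q.1 + 2
  · rw [← hq2]; exact hq
  exfalso
  -- The vertex `q.1 + 2` would have to be the apex of some pair `r`; then `r` or `(r.1, q.1 + 2)`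
  -- is shorter than `q` or crosses `q`.
  have : q.1 + 2 ∈ S.image (apex S) := by
    rw [himg]; exact Finset.mem_Ioo.2 ⟨by omega, by omega⟩
  obtain ⟨r, hr, hra⟩ := Finset.mem_image.1 this
  obtain ⟨b1, b2, b3⟩ := hap r hr
  rw [hra] at b1 b2 b3
  have hr1 := hmin r hr
  have hc1 := hcr q hq r hr
  rcases b1 with b1 | b1
  · omega
  · have hr2 := hmin _ b1
    have hc2 := hcr _ b1 q hq
    simp only at hr2 hc2
    omega

/-- A triangulation contains an ear whose apex differs from any prescribed vertex. -/
theorem IsTriangulation.exists_ear (hn : 5 ≤ n) {τ : Finset (Sym2 (ZMod n))}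
    (hτ : IsTriangulation τ) (v : ZMod n) : ∃ w, w ≠ v ∧ ear w ∈ τ := by
  classical
  obtain ⟨hc, hd, hx⟩ := hτ
  let f : ℕ × ℕ → Sym2 (ZMod n) := fun q => s(v + (q.1 : ZMod n), v + (q.2 : ZMod n))
  let S₀ : Finset (ℕ × ℕ) := (Finset.range n ×ˢ Finset.range n).filter fun q =>
    q.1 + 2 ≤ q.2 ∧ (q.1 ≠ 0 ∨ q.2 ≠ n - 1) ∧ f q ∈ τ
  have hmem : ∀ q, q ∈ S₀ ↔ q.2 < n ∧ q.1 + 2 ≤ q.2 ∧ (q.1 ≠ 0 ∨ q.2 ≠ n - 1) ∧ f q ∈ τ := by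
    intro q
    simp only [S₀, Finset.mem_filter, Finset.mem_product, Finset.mem_range]
    constructor
    · rintro ⟨⟨_, h⟩, h'⟩; exact ⟨h, h'⟩
    · rintro ⟨h, h'⟩; exact ⟨⟨by omega, h⟩, h'⟩
  have hcard : n - 3 ≤ S₀.card := by
    rw [← hc]
    refine le_trans (Finset.card_le_card ?_) (Finset.card_image_le (f := f))
    intro d hdτ
    obtain ⟨a, b, h1, h2, h3, rfl⟩ := exists_coord_of_isDiag v (hd d hdτ)
    exact Finset.mem_image.2 ⟨(a, b), (hmem _).2 ⟨h2, h1, h3, hdτ⟩, rfl⟩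
  -- Adding the side `(0, n - 1)` gives the `m - 1` pairs required with `m = n - 1`.
  have hnot : ((0, n - 1) : ℕ × ℕ) ∉ S₀ := by
    rw [hmem]; simp
  obtain ⟨i, hi⟩ := exists_short_pair (m := n - 1) (by omega) (insert (0, n - 1) S₀)
    (by
      intro q hq
      rcases Finset.mem_insert.1 hq with rfl | hq
      · exact ⟨by simp only; omega, le_rfl⟩
      · have := (hmem q).1 hq
        omega)
    (by
      intro q hq r hr h
      rcases Finset.mem_insert.1 hq with rfl | hq <;> rcases Finset.mem_insert.1 hr with rfl | hr
      · simp only at h; omega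
      · have := (hmem r).1 hr
        simp only at h; omega
      · simp only at h; omega
      · obtain ⟨a1, a2, a3, a4⟩ := (hmem q).1 hq
        obtain ⟨b1, b2, b3, b4⟩ := (hmem r).1 hr
        exact hx _ a4 _ b4
          ((crosses_coord v (by omega) a1 (by omega) b1).2 (.inl h)))
    (by rw [Finset.card_insert_of_notMem hnot]; omega)
  rcases Finset.mem_insert.1 hi with h | h
  · simp only [Prod.mk.injEq] at h; omega
  · obtain ⟨a1, a2, a3, a4⟩ := (hmem _).1 h
    simp only at a1
    refine ⟨v + ((i + 1 : ℕ) : ZMod n), ?_, ?_⟩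
    · intro h
      have := coord_inj v (x := i + 1) (y := 0) (by omega) (by omega) (by simpa using h)
      omega
    · rw [ear_coord v (by omega)]
      exact a4

/-! ### Chord lengths -/

theorem norm_pt_sub (s t : ℝ) : ‖pt s - pt t‖ = 2 * |Real.sin ((t - s) / 2)| := by
  rw [EuclideanSpace.norm_eq, ← abs_two, ← abs_mul, ← Real.sqrt_sq_eq_abs]
  congr 1
  have h : ∀ u w : ℝ, (Real.cos (u + w) - Real.cos (u - w)) ^ 2 +
      (Real.sin (u + w) - Real.sin (u - w)) ^ 2 = (2 * Real.sin w) ^ 2 := by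
    intro u w
    rw [Real.cos_add, Real.cos_sub, Real.sin_add, Real.sin_sub]
    linear_combination 4 * Real.sin w ^ 2 * Real.sin_sq_add_cos_sq u
  have h' := h ((s + t) / 2) ((t - s) / 2)
  rw [show (s + t) / 2 + (t - s) / 2 = t by ring,
    show (s + t) / 2 - (t - s) / 2 = s by ring] at h'
  simp only [Fin.sum_univ_two, pt, Real.norm_eq_abs, sq_abs, abs_two]
  rw [← h']
  simp
  ring

/-- Unrolled angles seen from the vertex `v`: they increase by less than a full turn, and lengths
are given by the usual chord formula. -/
theorem exists_unrolled (θ : ZMod n → ℝ)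
    (hmono : ∀ i j : ZMod n, i.val < j.val → θ i < θ j)
    (hlb : ∀ i : ZMod n, 0 ≤ θ i) (hub : ∀ i : ZMod n, θ i < 2 * Real.pi)
    (p : ZMod n → EuclideanSpace ℝ (Fin 2)) (hp : ∀ i : ZMod n, p i = pt (θ i)) (v : ZMod n) :
    ∃ f : ℕ → ℝ, (∀ x y, x < y → y < n → f x < f y) ∧
      (∀ x y, x < y → y < n → f y - f x < 2 * Real.pi) ∧
      ∀ x y, x < y → y < n →
        len p s(v + (x : ZMod n), v + (y : ZMod n)) = 2 * Real.sin ((f y - f x) / 2) := by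
  have hval : ∀ x < n, (v + (x : ZMod n)).val =
      if v.val + x < n then v.val + x else v.val + x - n := by
    intro x hx
    have hv := ZMod.val_lt v
    rw [ZMod.val_add, ZMod.val_natCast_of_lt hx]
    split_ifs with h
    · exact Nat.mod_eq_of_lt h
    · rw [Nat.mod_eq_sub_mod (by omega), Nat.mod_eq_of_lt (by omega)]
  let f : ℕ → ℝ := fun x => θ (v + (x : ZMod n)) + if v.val + x < n then 0 else 2 * Real.pi
  have hv := ZMod.val_lt v
  have h1 : ∀ x y, x < y → y < n → f x < f y := by
    intro x y hxy hy
    have vx := hval x (by omega)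
    have vy := hval y hy
    have l1 := hlb (v + (y : ZMod n))
    have l2 := hub (v + (x : ZMod n))
    simp only [f]
    split_ifs at vx vy ⊢
    · have := hmono (v + (x : ZMod n)) (v + (y : ZMod n)) (by omega); linarith
    · linarith
    · omega
    · have := hmono (v + (x : ZMod n)) (v + (y : ZMod n)) (by omega); linarith
  have h2 : ∀ x y, x < y → y < n → f y - f x < 2 * Real.pi := by
    intro x y hxy hy
    have vx := hval x (by omega)
    have vy := hval y hy
    have l1 := hlb (v + (x : ZMod n))
    have l2 := hub (v + (y : ZMod n))
    simp only [f]
    by_cases cx : v.val + x < n <;> by_cases cy : v.val + y < n <;>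
      simp only [cx, cy, if_true, if_false] at vx vy ⊢
    · linarith
    · have := hmono (v + (y : ZMod n)) (v + (x : ZMod n)) (by omega); linarith
    · omega
    · linarith
  refine ⟨f, h1, h2, ?_⟩
  intro x y hxy hy
  have g1 := h1 x y hxy hy
  have g2 := h2 x y hxy hy
  have hs : 0 ≤ Real.sin ((f y - f x) / 2) :=
    Real.sin_nonneg_of_nonneg_of_le_pi (by linarith) (by linarith)
  rw [← abs_of_nonneg hs]
  change ‖p _ - p _‖ = _
  rw [hp, hp, norm_pt_sub]
  have hx : x < n := by omega
  simp only [f]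
  by_cases cx : v.val + x < n <;> by_cases cy : v.val + y < n <;>
    simp only [cx, cy, if_true, if_false]
  · simp
  · rw [show (θ (v + (y : ZMod n)) + 2 * Real.pi - (θ (v + (x : ZMod n)) + 0)) / 2 =
      (θ (v + (y : ZMod n)) - θ (v + (x : ZMod n))) / 2 + Real.pi by ring, Real.sin_add_pi,
      abs_neg]
  · omega
  · simp

/-- Two non-crossing ears `ear v`, `ear (v + k)` lie in a triangulation all of whose other
diagonals separate the two apexes, and are hence strictly longer than the shorter of the two ears.
In coordinates based at `v` it consists of the fan from `n - 1` to `1, …, k - 1` and the fan from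
`k - 1` to `k + 1, …, n - 1`. -/
theorem exists_strip (θ : ZMod n → ℝ)
    (hmono : ∀ i j : ZMod n, i.val < j.val → θ i < θ j)
    (hlb : ∀ i : ZMod n, 0 ≤ θ i) (hub : ∀ i : ZMod n, θ i < 2 * Real.pi)
    (p : ZMod n → EuclideanSpace ℝ (Fin 2)) (hp : ∀ i : ZMod n, p i = pt (θ i))
    (v : ZMod n) {k : ℕ} (hk : 2 ≤ k) (hkn : k + 2 ≤ n) (hn : 5 ≤ n) :
    ∃ T : Finset (Sym2 (ZMod n)), IsTriangulation T ∧ ear v ∈ T ∧ ear (v + (k : ZMod n)) ∈ T ∧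
      ∀ d ∈ T, d = ear v ∨ d = ear (v + (k : ZMod n)) ∨
        min (len p (ear v)) (len p (ear (v + (k : ZMod n)))) < len p d := by
  classical
  obtain ⟨f, hf1, hf2, hf3⟩ := exists_unrolled θ hmono hlb hub p hp v
  rw [ear_base, ear_coord v (by omega)]
  let g : ℕ × ℕ → Sym2 (ZMod n) := fun q => s(v + (q.1 : ZMod n), v + (q.2 : ZMod n))
  let A : Finset (ℕ × ℕ) := (Finset.Icc 1 (k - 1)).image fun x => (x, n - 1)
  let B : Finset (ℕ × ℕ) := (Finset.Ico (k + 1) (n - 1)).image fun y => (k - 1, y)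
  have hmem : ∀ q, q ∈ A ∪ B ↔ (1 ≤ q.1 ∧ q.1 ≤ k - 1 ∧ q.2 = n - 1) ∨
      (q.1 = k - 1 ∧ k + 1 ≤ q.2 ∧ q.2 < n - 1) := by
    rintro ⟨a, b⟩
    simp only [A, B, Finset.mem_union, Finset.mem_image, Finset.mem_Icc, Finset.mem_Ico,
      Prod.mk.injEq]
    constructor
    · rintro (⟨x, h, rfl, rfl⟩ | ⟨x, h, rfl, rfl⟩)
      · left; omega
      · right; omega
    · rintro (h | h)
      · exact .inl ⟨a, by omega, rfl, by omega⟩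
      · exact .inr ⟨b, by omega, by omega, rfl⟩
  have hcard : (A ∪ B).card = n - 3 := by
    rw [Finset.card_union_of_disjoint, Finset.card_image_of_injective, Finset.card_image_of_injective,
      Nat.card_Icc, Nat.card_Ico]
    · omega
    · intro a b h; exact (Prod.mk.inj h).2
    · intro a b h; exact (Prod.mk.inj h).1
    · rw [Finset.disjoint_left]
      intro q h1 h2
      simp only [A, B, Finset.mem_image, Finset.mem_Icc, Finset.mem_Ico] at h1 h2
      obtain ⟨x, hx, rfl⟩ := h1
      obtain ⟨y, hy, h⟩ := h2
      have := (Prod.mk.inj h).2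
      omega
  have hbd : ∀ q ∈ A ∪ B, 1 ≤ q.1 ∧ q.1 ≤ k - 1 ∧ k + 1 ≤ q.2 ∧ q.2 ≤ n - 1 := by
    intro q hq
    have := (hmem q).1 hq
    omega
  refine ⟨(A ∪ B).image g, ⟨?_, ?_, ?_⟩, ?_, ?_, ?_⟩
  · rw [Finset.card_image_of_injOn, hcard]
    intro q hq r hr h
    have := hbd q hq
    have := hbd r hr
    have := pair_coord_inj v (by omega) (by omega) (by omega) (by omega) h
    exact Prod.ext this.1 this.2
  · intro d hd
    obtain ⟨q, hq, rfl⟩ := Finset.mem_image.1 hd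
    have := hbd q hq
    exact isDiag_coord v (by omega) (by omega) (by omega)
  · intro d hd e he
    obtain ⟨q, hq, rfl⟩ := Finset.mem_image.1 hd
    obtain ⟨r, hr, rfl⟩ := Finset.mem_image.1 he
    have := hbd q hq
    have := hbd r hr
    have := (hmem q).1 hq
    have := (hmem r).1 hr
    simp only [g]
    rw [crosses_coord v (by omega) (by omega) (by omega) (by omega)]
    omega
  · exact Finset.mem_image.2 ⟨(1, n - 1), (hmem (1, n - 1)).2 (.inl ⟨le_rfl, by simp only; omega, rfl⟩), rfl⟩
  · refine Finset.mem_image.2 ⟨(k - 1, k + 1), (hmem (k - 1, k + 1)).2 ?_, rfl⟩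
    by_cases h : k + 1 = n - 1
    · exact .inl ⟨by simp only; omega, le_rfl, h⟩
    · exact .inr ⟨rfl, le_rfl, by simp only; omega⟩
  · intro d hd
    obtain ⟨q, hq, rfl⟩ := Finset.mem_image.1 hd
    obtain ⟨b1, b2, b3, b4⟩ := hbd q hq
    by_cases e1 : q = (1, n - 1)
    · left; rw [e1]
    by_cases e2 : q = (k - 1, k + 1)
    · right; left; rw [e2]
    right; right
    have hle : ∀ x y, x ≤ y → y < n → f x ≤ f y := by
      intro x y hxy hy
      rcases hxy.eq_or_lt with rfl | h
      · exact le_rfl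
      · exact (hf1 x y h hy).le
    have e1' : 1 < q.1 ∨ q.2 < n - 1 := by
      by_contra! h
      exact e1 (Prod.ext (by simp only; omega) (by simp only; omega))
    have e2' : q.1 < k - 1 ∨ k + 1 < q.2 := by
      by_contra! h
      exact e2 (Prod.ext (by simp only; omega) (by simp only; omega))
    have hlo : f (k + 1) - f (k - 1) < f q.2 - f q.1 := by
      have i1 := hle q.1 (k - 1) (by omega) (by omega)
      have i2 := hle (k + 1) q.2 (by omega) (by omega)
      rcases e2' with h | h
      · have := hf1 q.1 (k - 1) h (by omega); linarith
      · have := hf1 (k + 1) q.2 h (by omega); linarith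
    have hhi : f q.2 - f q.1 < f (n - 1) - f 1 := by
      have i1 := hle 1 q.1 (by omega) (by omega)
      have i2 := hle q.2 (n - 1) (by omega) (by omega)
      rcases e1' with h | h
      · have := hf1 1 q.1 h (by omega); linarith
      · have := hf1 q.2 (n - 1) h (by omega); linarith
    have h0 := hf1 (k - 1) (k + 1) (by omega) (by omega)
    have h2pi := hf2 1 (n - 1) (by omega) (by omega)
    simp only [g]
    rw [hf3 _ _ (by omega) (by omega), hf3 _ _ (by omega) (by omega),
      hf3 _ _ (by omega) (by omega)]
    have := strictConcaveOn_sin_Icc.lt_on_openSegment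
      (x := (f (k + 1) - f (k - 1)) / 2) (y := (f (n - 1) - f 1) / 2)
      (z := (f q.2 - f q.1) / 2)
      ⟨by linarith, by linarith⟩ ⟨by linarith, by linarith⟩ (by intro h; linarith)
      (by rw [openSegment_eq_Ioo (by linarith)]; exact ⟨by linarith, by linarith⟩)
    rcases min_lt_iff.1 this with h | h
    · exact min_lt_iff.2 (.inr (by linarith))
    · exact min_lt_iff.2 (.inl (by linarith))

/-! ### Length maximal triangulations -/

theorem stmt19 {n : ℕ} [NeZero n] (hn : 5 ≤ n)
    (θ : ZMod n → ℝ)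
    (hmono : ∀ i j : ZMod n, i.val < j.val → θ i < θ j)
    (hlb : ∀ i : ZMod n, 0 ≤ θ i) (hub : ∀ i : ZMod n, θ i < 2 * Real.pi)
    (p : ZMod n → EuclideanSpace ℝ (Fin 2)) (hp : ∀ i : ZMod n, p i = pt (θ i))
    (hsym : ¬ HasSymQuad p)
    (i0 i1 i2 : ZMod n)
    (h10 : ear i1 ≠ ear i0) (h20 : ear i2 ≠ ear i0) (h21 : ear i1 ≠ ear i2)
    (huniq0 : ∀ j : ZMod n, ear j ≠ ear i0 → len p (ear j) < len p (ear i0))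
    (heq : len p (ear i1) = len p (ear i2))
    (hsecond : ∀ j : ZMod n, ear j ≠ ear i0 → len p (ear j) ≤ len p (ear i1))
    (honly : ∀ j : ZMod n, ear j ≠ ear i0 → len p (ear j) = len p (ear i1) →
      ear j = ear i1 ∨ ear j = ear i2) :
    (Crosses (ear i0) (ear i1) ∧ Crosses (ear i0) (ear i2) →
      ∀ τ : Finset (Sym2 (ZMod n)), LengthMaximal p τ → ear i1 ∈ τ ∧ ear i2 ∈ τ) ∧
    (Crosses (ear i0) (ear i1) ∧ ¬ Crosses (ear i0) (ear i2) →
      ∀ τ : Finset (Sym2 (ZMod n)), LengthMaximal p τ → ear i0 ∈ τ ∧ ear i2 ∈ τ) ∧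
    (¬ Crosses (ear i0) (ear i1) ∧ Crosses (ear i0) (ear i2) →
      ∀ τ : Finset (Sym2 (ZMod n)), LengthMaximal p τ → ear i0 ∈ τ ∧ ear i1 ∈ τ) ∧
    (¬ Crosses (ear i0) (ear i1) ∧ ¬ Crosses (ear i0) (ear i2) →
      ∀ τ : Finset (Sym2 (ZMod n)), LengthMaximal p τ → ear i0 ∈ τ) := by

  have hne10 : i1 ≠ i0 := fun h => h10 (by rw [h])
  have hne20 : i2 ≠ i0 := fun h => h20 (by rw [h])
  have hne21 : i1 ≠ i2 := fun h => h21 (by rw [h])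
  have hlt : len p (ear i1) < len p (ear i0) := huniq0 i1 h10
  -- Ears at distinct vertices that do not cross lie in a common strip.
  have strip : ∀ i j : ZMod n, j ≠ i → ¬ Crosses (ear i) (ear j) →
      ∃ T : Finset (Sym2 (ZMod n)), IsTriangulation T ∧ ear i ∈ T ∧ ear j ∈ T ∧
        ∀ d ∈ T, d = ear i ∨ d = ear j ∨ min (len p (ear i)) (len p (ear j)) < len p d := by
    intro i j hji hc
    obtain ⟨k, hk, rfl⟩ := exists_coord i j
    rw [crosses_ear_coord hn i hk] at hc
    have hk0 : k ≠ 0 := by rintro rfl; simp at hji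
    exact exists_strip θ hmono hlb hub p hp i (by omega) (by omega) hn
  have ears : ∀ τ, IsTriangulation τ → (∀ d ∈ τ, len p (ear i1) ≤ len p d) →
      (ear i0 ∈ τ ∧ ear i1 ∈ τ) ∨ (ear i0 ∈ τ ∧ ear i2 ∈ τ) ∨ (ear i1 ∈ τ ∧ ear i2 ∈ τ) := by
    intro τ hτ hL
    have three : ∀ w, ear w ∈ τ → w = i0 ∨ w = i1 ∨ w = i2 := by
      intro w hw
      by_cases h0 : ear w = ear i0
      · exact .inl (ear_injective hn h0)
      · rcases honly w h0 (le_antisymm (hsecond w h0) (hL _ hw)) with h | h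
        · exact .inr (.inl (ear_injective hn h))
        · exact .inr (.inr (ear_injective hn h))
    obtain ⟨w, -, hw⟩ := hτ.exists_ear hn i0
    obtain ⟨w', hne, hw'⟩ := hτ.exists_ear hn w
    rcases three w hw with rfl | rfl | rfl <;> rcases three w' hw' with rfl | rfl | rfl <;>
      first | exact absurd rfl hne | tauto
  -- A strip through `ear i0` and one of the second longest ears `ear j` has a single diagonal
  -- of minimal length, which rules out `ear i1` and `ear i2` occurring together.
  have main : ∀ j, (j = i1 ∨ j = i2) → ¬ Crosses (ear i0) (ear j) → ∀ τ, LengthMaximal p τ →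
      (∀ d ∈ τ, len p (ear i1) ≤ len p d) ∧ ¬ (ear i1 ∈ τ ∧ ear i2 ∈ τ) := by
    intro j hj hc τ hτ
    have hj0 : j ≠ i0 := by rcases hj with rfl | rfl <;> assumption
    have hjL : len p (ear j) = len p (ear i1) := by
      rcases hj with rfl | rfl
      · rfl
      · exact heq.symm
    obtain ⟨T, hT, hT0, hTj, hTd⟩ := strip i0 j hj0 hc
    rw [hjL, min_eq_right hlt.le] at hTd
    have hTd' : ∀ d ∈ T, d ≠ ear j → len p (ear i1) < len p d := by
      intro d hd hdj
      rcases hTd d hd with rfl | rfl | h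
      · exact hlt
      · exact absurd rfl hdj
      · exact h
    refine ⟨hτ.le_len hT ⟨_, hT0⟩ ?_, ?_⟩
    · intro d hd
      by_cases h : d = ear j
      · rw [h, hjL]
      · exact (hTd' d hd h).le
    · rintro ⟨m1, m2⟩
      exact hτ.not_double hT hTj hT0 (fun h => hj0 (ear_injective hn h).symm) hjL hTd' m1 m2 h21
        rfl heq.symm
  refine ⟨?_, ?_, ?_, ?_⟩
  · rintro ⟨c1, c2⟩ τ hτ
    have hnc : ¬ Crosses (ear i1) (ear i2) := by
      obtain ⟨a, ha, ha'⟩ := exists_coord i1 i0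
      obtain ⟨k, hk, hk'⟩ := exists_coord i0 i1
      obtain ⟨l, hl, hl'⟩ := exists_coord i0 i2
      obtain ⟨b, hb, hb'⟩ := exists_coord i1 i2
      rw [hk', crosses_ear_coord hn i0 hk] at c1
      rw [hl', crosses_ear_coord hn i0 hl] at c2
      have hkl : k ≠ l := by
        rintro rfl
        exact hne21 (hk'.trans hl'.symm)
      have hbv := val_sub_coord i0 hk hl
      rw [← hk', ← hl', hb', add_sub_cancel_left, ZMod.val_natCast_of_lt hb] at hbv
      rw [hb', crosses_ear_coord hn i1 hb]
      split_ifs at hbv <;> omega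
    obtain ⟨T, hT, hT1, hT2, hTd⟩ := strip i1 i2 hne21.symm hnc
    rw [← heq, min_self] at hTd
    have hL : ∀ d ∈ τ, len p (ear i1) ≤ len p d := by
      refine hτ.le_len hT ⟨_, hT1⟩ ?_
      intro d hd
      rcases hTd d hd with rfl | rfl | h
      · exact le_rfl
      · exact heq.le
      · exact h.le
    rcases ears τ hτ.1 hL with h | h | h
    · exact absurd c1 (hτ.1.2.2 _ h.1 _ h.2)
    · exact absurd c2 (hτ.1.2.2 _ h.1 _ h.2)
    · exact h
  · rintro ⟨c1, c2⟩ τ hτ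
    obtain ⟨hL, hno⟩ := main i2 (.inr rfl) c2 τ hτ
    rcases ears τ hτ.1 hL with h | h | h
    · exact absurd c1 (hτ.1.2.2 _ h.1 _ h.2)
    · exact h
    · exact absurd h hno
  · rintro ⟨c1, c2⟩ τ hτ
    obtain ⟨hL, hno⟩ := main i1 (.inl rfl) c1 τ hτ
    rcases ears τ hτ.1 hL with h | h | h
    · exact h
    · exact absurd c2 (hτ.1.2.2 _ h.1 _ h.2)
    · exact absurd h hno
  · rintro ⟨c1, c2⟩ τ hτ
    obtain ⟨hL, hno⟩ := main i1 (.inl rfl) c1 τ hτ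
    rcases ears τ hτ.1 hL with h | h | h
    · exact h.1
    · exact h.1
    · exact absurd h hno
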